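/- Let w ∈ S_n be co-Grassmannian with unique ascent at position k (that is, w(j) > w(j+1) for all j ≠ k and w(k) < w(k+1)), and let v ≤ w in Bruhat order be co-Grassmannian with unique ascent also at position k. Define partitions λ(u) for such permutations u by λ(u)_{k−i+1} = n − u(i) + 1 − i for 1 ≤ i ≤ k; then λ(w) ⊆ λ(v). Set b_m = max{i : λ(v)_i ≥ λ(w)_m + i − m}. Then #RedPipes(v, w_0 w) equals the number of semistandard Young tableaux of shape λ(w) in which every entry of row m is at most b_m, for every m. -/

import Mathlib

/-!
Reduced pipe dreams for `w₀w` on `D(v)` are excited Young diagrams of `λ(w)` inside `λ(v)`, and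
recording the row to which each cell has moved turns these into flagged tableaux.

In detail, write `k` for the ascent. A box of `D(v)` is described by its column `r`, counted from
the right, and by its row `q`, counted from the bottom among the nonempty rows. These pairs range
over the cells of `λ(v)` (`UniqueAscentAt.exists_box_iff`), and the canonical label of the box is
`k + q - r` (`UniqueAscentAt.label`). The permutation `w₀w` is Grassmannian with descent `k` and
partition `λ(w)`. Its left descents are the corners of the partition, the corner `(m, c)` giving the
transposition `s_{k+c-m}`, and multiplying by that transposition removes the corner
(`Grass.remove`, `Grass.corner_of_descent`). Since a word with as many letters as the length of its
Demazure product is just a reduced word (`reduced_iff`), a set `P ⊆ D(v)` is a reduced pipe dream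
for `w₀w` exactly when its word, read backwards, adds the cells of `λ(w)` one by one (`chain_iff`).

If the `c`-th cell of row `m` is added by the box `(r, q)`, then `q - r = c - m`; put `T (m, c) = r`.
Backward reading order compares `q` first and `r` second, so that a cell coming after its left and
upper neighbours says exactly that `T` is semistandard. Instead of this bijection, `encard_chains`
shows that both families satisfy the same recursion on the list of boxes: the last added box is
either unused, or it holds the unique corner of its content, which is then removed.

Finally, `λ(v)_t - t` decreases with `t` and the entries of a row increase, so the boxes of all cells
of row `m` lie in `λ(v)` exactly when the entries of the row are at most `b_m` (`flagged_iff`).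
-/

open Equiv MvPolynomial

noncomputable section
open scoped Classical

variable {n : ℕ}

/-- The 0-based value of a permutation of `Fin n` on a natural number,
extended by the identity outside `{0, …, n-1}`. -/
def permVal (v : Equiv.Perm (Fin n)) (j : ℕ) : ℕ :=
  if h : j < n then (v ⟨j, h⟩ : ℕ) else j

/-- The longest element `w₀` of the symmetric group, `w₀(i) = n + 1 - i` (1-based). -/
def longest : Equiv.Perm (Fin n) :=
  ⟨Fin.rev, Fin.rev, Fin.rev_rev, Fin.rev_rev⟩

/-- The Rothe diagram of `v`, as a set of 0-based boxes `(i, j)` where `i` counts rows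
from the bottom and `j` columns from the left.  In 1-based terms this is
`{(i,j) : i < n - v(j) + 1 and j < v⁻¹(n - i + 1)}`. -/
def Rothe (v : Equiv.Perm (Fin n)) : Finset (ℕ × ℕ) :=
  (Finset.range n ×ˢ Finset.range n).filter
    (fun p => p.1 + permVal v p.2 + 1 < n ∧ p.2 < permVal v.symm (n - 1 - p.1))

/-- The rank matrix `r^w_{ij} = #{k ≤ j : w(k) ≥ n - i + 1}` (translated to 0-based `i`, `j`). -/
def rankMat (w : Equiv.Perm (Fin n)) (i j : ℕ) : ℕ :=
  ((Finset.range n).filter (fun t => t ≤ j ∧ n ≤ permVal w t + i + 1)).card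

/-- Bruhat order via rank matrices. -/
def bruhatLE (u w : Equiv.Perm (Fin n)) : Prop :=
  ∀ i j : ℕ, rankMat u i j ≤ rankMat w i j

/-- The essential set of `w`. -/
def essentialSet (w : Equiv.Perm (Fin n)) : Finset (ℕ × ℕ) :=
  (Rothe w).filter (fun p => (p.1 + 1, p.2) ∉ Rothe w ∧ (p.1, p.2 + 1) ∉ Rothe w)

/-- The number of inversions (Coxeter length) of a permutation. -/
def invCount (u : Equiv.Perm (Fin n)) : ℕ :=
  ((Finset.univ : Finset (Fin n × Fin n)).filter
    (fun p => p.1 < p.2 ∧ u p.2 < u p.1)).card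

/-- The adjacent transposition `s_l` (`l` 1-based) swapping `l` and `l+1`;
the identity if `l` is out of range. -/
def adjSwap {n : ℕ} (l : ℕ) : Equiv.Perm (Fin n) :=
  if h : 1 ≤ l ∧ l < n then Equiv.swap ⟨l - 1, by omega⟩ ⟨l, h.2⟩ else 1

/-- The canonical (1-based) label of a box of `D(v)`: the `t`-th box from the left in
(1-based) row `i` gets label `i + t - 1`. -/
def canonLabel (v : Equiv.Perm (Fin n)) (b : ℕ × ℕ) : ℕ :=
  b.1 + ((Rothe v).filter (fun b' => b'.1 = b.1 ∧ b'.2 ≤ b.2)).card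

/-- The boxes of `P` listed in reading order: rows from top (largest row index) to bottom,
left to right within each row. -/
def readingList (n : ℕ) (P : Finset (ℕ × ℕ)) : List (ℕ × ℕ) :=
  ((List.range n).reverse).flatMap
    (fun i => ((List.range n).filter (fun j => decide ((i, j) ∈ P))).map (fun j => (i, j)))

/-- One step of the Demazure product: multiply by `s_ℓ` if that increases length. -/
def demStep (v : Equiv.Perm (Fin n)) (u : Equiv.Perm (Fin n)) (b : ℕ × ℕ) :
    Equiv.Perm (Fin n) :=
  if invCount u < invCount (u * adjSwap (canonLabel v b)) then u * adjSwap (canonLabel v b)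
  else u

/-- The Demazure product of a pipe dream `P ⊆ D(v)`, scanning boxes in reading order. -/
def demazure (v : Equiv.Perm (Fin n)) (P : Finset (ℕ × ℕ)) : Equiv.Perm (Fin n) :=
  (readingList n P).foldl (demStep v) 1

/-- Pipe dreams on `D(v)` whose Demazure product is `x`. -/
def Pipes (v x : Equiv.Perm (Fin n)) : Finset (Finset (ℕ × ℕ)) :=
  (Rothe v).powerset.filter (fun P => demazure v P = x)

/-- Reduced pipe dreams on `D(v)` for `x`. -/
def RedPipes (v x : Equiv.Perm (Fin n)) : Finset (Finset (ℕ × ℕ)) :=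
  (Pipes v x).filter (fun P => P.card = invCount x)

/-- Faces of the pipe complex `Δ_{v,w}`: subsets `F ⊆ D(v)` such that `D(v) \ F`
contains a reduced pipe dream for `w₀ w`. -/
def IsFace (v w : Equiv.Perm (Fin n)) (F : Finset (ℕ × ℕ)) : Prop :=
  F ⊆ Rothe v ∧ ∃ P ∈ RedPipes v (longest * w), P ⊆ Rothe v \ F

/-- The staircase `{(i,j) : i + j ≤ n}` (1-based), translated to 0-based boxes. -/
def staircase (n : ℕ) : Finset (ℕ × ℕ) :=
  (Finset.range n ×ˢ Finset.range n).filter (fun p => p.1 + p.2 + 2 ≤ n)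

/-- The label `i + j - 1` (1-based) of a staircase box, in 0-based coordinates. -/
def fkLabel (b : ℕ × ℕ) : ℕ := b.1 + b.2 + 1

/-- One step of the Demazure product for Fomin–Kirillov pipe dreams. -/
def fkStep (u : Equiv.Perm (Fin n)) (b : ℕ × ℕ) : Equiv.Perm (Fin n) :=
  if invCount u < invCount (u * adjSwap (fkLabel b)) then u * adjSwap (fkLabel b) else u

/-- The Demazure product of an FK pipe dream on the staircase. -/
def fkDemazure (n : ℕ) (P : Finset (ℕ × ℕ)) : Equiv.Perm (Fin n) :=
  (readingList n P).foldl fkStep 1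

/-- FK pipe dreams on the staircase with Demazure product `x`. -/
def FKPipes (x : Equiv.Perm (Fin n)) : Finset (Finset (ℕ × ℕ)) :=
  (staircase n).powerset.filter (fun P => fkDemazure n P = x)

/-- Reduced FK pipe dreams for `x`. -/
def RedFKPipes (x : Equiv.Perm (Fin n)) : Finset (Finset (ℕ × ℕ)) :=
  (FKPipes x).filter (fun P => P.card = invCount x)

/-- The coordinate ring `R_v = k[z_{ij} : (i,j) ∈ D(v)]`. -/
abbrev KLRing (k : Type) [Field k] (v : Equiv.Perm (Fin n)) : Type :=
  MvPolynomial {b : ℕ × ℕ // b ∈ Rothe v} k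

/-- The specialized generic matrix `Z^{(v)}`: variables on `D(v)`, `1` in positions
`(n - v(j) + 1, j)` (1-based) and `0` elsewhere. -/
def klMatrix (k : Type) [Field k] (v : Equiv.Perm (Fin n)) :
    Matrix (Fin n) (Fin n) (KLRing k v) := fun i j =>
  if h : ((i : ℕ), (j : ℕ)) ∈ Rothe v then X ⟨((i : ℕ), (j : ℕ)), h⟩
  else if (i : ℕ) + permVal v j + 1 = n then 1 else 0

/-- The minors of size `1 + r^w_{ij}` of the southwest submatrix `Z^{(v)}_{ij}`
(`(i,j)` a 0-based box, so rows `0..i` and columns `0..j`). -/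
def minorsAt (k : Type) [Field k] (v w : Equiv.Perm (Fin n)) (i j : ℕ) :
    Set (KLRing k v) :=
  { d | ∃ ri ci : Fin (rankMat w i j + 1) → Fin n,
      StrictMono ri ∧ StrictMono ci ∧ (∀ a, (ri a : ℕ) ≤ i) ∧ (∀ a, (ci a : ℕ) ≤ j) ∧
      d = ((klMatrix k v).submatrix ri ci).det }

/-- The Kazhdan–Lusztig ideal `I_{v,w}`. -/
def KLIdeal (k : Type) [Field k] (v w : Equiv.Perm (Fin n)) : Ideal (KLRing k v) :=
  Ideal.span { d | ∃ i j : ℕ, i < n ∧ j < n ∧ d ∈ minorsAt k v w i j }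

/-- The essential minors of `I_{v,w}`: those at boxes of the essential set of `w`. -/
def essentialMinors (k : Type) [Field k] (v w : Equiv.Perm (Fin n)) : Set (KLRing k v) :=
  { d | ∃ b ∈ essentialSet w, d ∈ minorsAt k v w b.1 b.2 }

/-- Significance of a variable: `z_{ij} ≻ z_{kl}` iff `j > l` or (`j = l` and `i < k`),
encoded so that larger significance means ≺-larger variable. -/
def sigIdx (n : ℕ) (b : ℕ × ℕ) : ℕ := b.2 * n + (n - 1 - b.1)

/-- The exponent in a monomial of the variable of significance `s`. -/
def expAt {v : Equiv.Perm (Fin n)} (m : {b : ℕ × ℕ // b ∈ Rothe v} →₀ ℕ) (s : ℕ) : ℕ :=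
  ∑ b ∈ m.support, if sigIdx n (b : ℕ × ℕ) = s then m b else 0

/-- The lexicographic comparison of monomials: `m ≻ m'`. -/
def monGT {v : Equiv.Perm (Fin n)} (m m' : {b : ℕ × ℕ // b ∈ Rothe v} →₀ ℕ) : Prop :=
  ∃ s : ℕ, expAt m' s < expAt m s ∧ ∀ t : ℕ, s < t → expAt m t = expAt m' t

/-- `L` is the ≺-leading term of `f`. -/
def IsLeadTerm (k : Type) [Field k] {v : Equiv.Perm (Fin n)} (f L : KLRing k v) : Prop :=
  ∃ m ∈ f.support, (∀ m' ∈ f.support, m' ≠ m → monGT m m') ∧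
    L = MvPolynomial.monomial m (f.coeff m)

/-- The initial ideal of `I` with respect to `≺`: the ideal generated by the leading
terms of all nonzero elements of `I`. -/
def initialIdeal (k : Type) [Field k] {v : Equiv.Perm (Fin n)} (I : Ideal (KLRing k v)) :
    Ideal (KLRing k v) :=
  Ideal.span { L | ∃ f ∈ I, f ≠ 0 ∧ IsLeadTerm k f L }


/-- `i` (1-based) is the last ascent of `v`: `v(i) < v(i+1)` and no ascent occurs later. -/
def IsLastAscent (v : Equiv.Perm (Fin n)) (i : ℕ) : Prop :=
  1 ≤ i ∧ i < n ∧ permVal v (i - 1) < permVal v i ∧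
    ∀ i' : ℕ, i < i' → i' < n → ¬ permVal v (i' - 1) < permVal v i'

/-- The box `z_last = (n - v(i+1) + 1, i)` (1-based), in 0-based coordinates,
where `i` is the last ascent of `v`. -/
def zlastBox (v : Equiv.Perm (Fin n)) (i : ℕ) : ℕ × ℕ :=
  (n - permVal v i - 1, i - 1)

/-- The relabeling map `φ`: delete the box `z_last` and move every other box of
column `i` (1-based) one step to the right. -/
def phiMap (v : Equiv.Perm (Fin n)) (i : ℕ) (P : Finset (ℕ × ℕ)) : Finset (ℕ × ℕ) :=
  P.filter (fun b => b.2 ≠ i - 1) ∪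
    ((P.filter (fun b => b.2 = i - 1 ∧ b.1 ≠ n - permVal v i - 1)).image
      (fun b => (b.1, b.2 + 1)))

/-- `u` is co-Grassmannian with unique ascent at (1-based) position `k₀`. -/
def UniqueAscentAt (u : Equiv.Perm (Fin n)) (k0 : ℕ) : Prop :=
  1 ≤ k0 ∧ k0 < n ∧ permVal u (k0 - 1) < permVal u k0 ∧
    ∀ j : ℕ, 1 ≤ j → j < n → j ≠ k0 → permVal u j < permVal u (j - 1)

/-- The partition `λ(u)` of a co-Grassmannian permutation with ascent at `k₀`:
`λ(u)_{k₀-i+1} = n - u(i) + 1 - i`, as a function of the (1-based) part index `m`. -/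
def lamPart (u : Equiv.Perm (Fin n)) (k0 m : ℕ) : ℕ :=
  if 1 ≤ m ∧ m ≤ k0 then n - permVal u (k0 - m) - (k0 - m + 1) else 0

/-- The flagging bound `b_m = max{i : λ(v)_i ≥ λ(w)_m + i - m}`. -/
def bFlag (v w : Equiv.Perm (Fin n)) (k0 m : ℕ) : ℕ :=
  ((Finset.Icc 1 (n + k0)).filter
    (fun i => lamPart w k0 m + i ≤ lamPart v k0 i + m)).sup id

/-- A semistandard Young tableau of shape `λ` (rows weakly increasing, columns strictly
increasing downward) with every entry of row `m` at most `bF m`; entries are recorded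
as a function on 1-based (row, column) boxes, `0` outside the diagram. -/
def IsFlaggedSSYT (lam bF : ℕ → ℕ) (T : ℕ × ℕ → ℕ) : Prop :=
  (∀ m c : ℕ, 1 ≤ m → 1 ≤ c → c ≤ lam m → 1 ≤ T (m, c) ∧ T (m, c) ≤ bF m) ∧
  (∀ m c : ℕ, ¬(1 ≤ m ∧ 1 ≤ c ∧ c ≤ lam m) → T (m, c) = 0) ∧
  (∀ m c : ℕ, 1 ≤ m → 1 ≤ c → c + 1 ≤ lam m → T (m, c) ≤ T (m, c + 1)) ∧
  (∀ m c : ℕ, 1 ≤ m → 1 ≤ c → c ≤ lam (m + 1) → T (m, c) < T (m + 1, c))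

/-! ### Corner removal and tableaux -/

/-- `ChainTo r q S μ`: read from its end to its head, the list `S` builds the partition `μ` out of
the empty one, each entry `b` adding a cell `(m, c)` of content `c - m = q b - r b`. -/
def ChainTo {β : Type} (r q : β → ℕ) : List β → (ℕ → ℕ) → Prop
  | [], μ => ∀ m, 1 ≤ m → μ m = 0
  | b :: S, μ => ∃ m, 1 ≤ m ∧ μ (m + 1) < μ m ∧ μ m + r b = m + q b ∧
      ChainTo r q S (Function.update μ m (μ m - 1))

/-- Semistandard tableaux `T` of shape `μ` in which the box of every cell `(m, c)`, namely the
one in row `T (m, c)` on the diagonal of `(m, c)`, belongs to the list `B`. -/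
def BoxTab {β : Type} (r q : β → ℕ) (B : List β) (μ : ℕ → ℕ) (T : ℕ × ℕ → ℕ) : Prop :=
  (∀ m c : ℕ, 1 ≤ m → 1 ≤ c → c ≤ μ m → ∃ b ∈ B, r b = T (m, c) ∧ q b + m = T (m, c) + c) ∧
  (∀ m c : ℕ, ¬(1 ≤ m ∧ 1 ≤ c ∧ c ≤ μ m) → T (m, c) = 0) ∧
  (∀ m c : ℕ, 1 ≤ m → 1 ≤ c → c + 1 ≤ μ m → T (m, c) ≤ T (m, c + 1)) ∧
  (∀ m c : ℕ, 1 ≤ m → 1 ≤ c → c ≤ μ (m + 1) → T (m, c) < T (m + 1, c))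

lemma part_anti {μ : ℕ → ℕ} (hμ : ∀ m, 1 ≤ m → μ (m + 1) ≤ μ m) {m m' : ℕ} (h1 : 1 ≤ m)
    (h : m ≤ m') : μ m' ≤ μ m := by
  induction m', h using Nat.le_induction with
  | base => exact le_rfl
  | succ t ht ih => exact (hμ t (by omega)).trans ih

/-- A partition has at most one corner of a given content. -/
lemma corner_unique {μ : ℕ → ℕ} (hμ : ∀ m, 1 ≤ m → μ (m + 1) ≤ μ m) {m m' : ℕ} (h1 : 1 ≤ m)
    (h1' : 1 ≤ m') (h : μ m + m' = μ m' + m) : m = m' := by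
  rcases lt_trichotomy m m' with hlt | rfl | hlt
  · have := part_anti hμ h1 hlt.le
    omega
  · rfl
  · have := part_anti hμ h1' hlt.le
    omega

lemma update_part {μ : ℕ → ℕ} (hμ : ∀ m, 1 ≤ m → μ (m + 1) ≤ μ m) {m : ℕ}
    (hc : μ (m + 1) < μ m) :
    ∀ t, 1 ≤ t →
      Function.update μ m (μ m - 1) (t + 1) ≤ Function.update μ m (μ m - 1) t := by
  intro t ht
  have := hμ t ht
  simp only [Function.update_apply]
  split_ifs with h1 h2 h2
  · omega
  · subst h1; omega
  · subst h2; omega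
  · omega

section count

variable {β : Type} {r q : β → ℕ} {b : β} {B : List β} {μ : ℕ → ℕ}

/-- The cell sitting on the last box of the list is a corner. -/
lemma BoxTab.corner {T : ℕ × ℕ → ℕ} (hT : BoxTab r q (b :: B) μ T)
    (hb : ∀ b' ∈ B, q b' < q b ∨ (q b' = q b ∧ r b' < r b))
    {m c : ℕ} (h1 : 1 ≤ m) (hc : 1 ≤ c) (hcm : c ≤ μ m) (hr : r b = T (m, c))
    (hq : q b + m = T (m, c) + c) : c = μ m ∧ μ (m + 1) < μ m := by
  have hc' : c = μ m := by
    by_contra hne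
    obtain ⟨b', hb', e1, e2⟩ := hT.1 m (c + 1) h1 (by omega) (by omega)
    have := hT.2.2.1 m c h1 hc (by omega)
    rcases List.mem_cons.1 hb' with rfl | hb'
    · omega
    · have := hb b' hb'
      omega
  refine ⟨hc', ?_⟩
  by_contra hlt
  obtain ⟨b', hb', e1, e2⟩ := hT.1 (m + 1) c (by omega) hc (by omega)
  have := hT.2.2.2 m c h1 hc (by omega)
  rcases List.mem_cons.1 hb' with rfl | hb'
  · omega
  · have := hb b' hb'
    omega

lemma BoxTab.mono {T : ℕ × ℕ → ℕ} (hT : BoxTab r q B μ T) : BoxTab r q (b :: B) μ T := by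
  refine ⟨fun m c h1 h2 h3 => ?_, hT.2⟩
  obtain ⟨b', hb', h⟩ := hT.1 m c h1 h2 h3
  exact ⟨b', List.mem_cons_of_mem _ hb', h⟩

/-- Placing the box `b`, later than all boxes of `B`, on a corner. -/
lemma BoxTab.extend {T : ℕ × ℕ → ℕ} (hμ : ∀ m, 1 ≤ m → μ (m + 1) ≤ μ m)
    (hb : ∀ b' ∈ B, q b' < q b ∨ (q b' = q b ∧ r b' < r b))
    {m : ℕ} (h1 : 1 ≤ m) (hc : μ (m + 1) < μ m) (hm : μ m + r b = m + q b)
    (hT : BoxTab r q B (Function.update μ m (μ m - 1)) T) :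
    BoxTab r q (b :: B) μ (Function.update T (m, μ m) (r b)) := by
  obtain ⟨t1, t2, t3, t4⟩ := hT
  simp only [Function.update_apply] at t1 t2 t3 t4
  refine ⟨fun m' c h1' hc' hcm => ?_, fun m' c h => ?_, fun m' c h1' hc' hcm => ?_,
    fun m' c h1' hc' hcm => ?_⟩ <;> simp only [Function.update_apply, Prod.mk.injEq]
  · split_ifs with h
    · obtain ⟨rfl, rfl⟩ := h
      exact ⟨b, by simp, rfl, by omega⟩
    · obtain ⟨b', hb', h'⟩ := t1 m' c h1' hc' (by
        split_ifs with h2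
        · subst h2
          simp only [true_and] at h
          omega
        · exact hcm)
      exact ⟨b', List.mem_cons_of_mem _ hb', h'⟩
  · rw [if_neg]
    · refine t2 m' c fun h' => h ⟨h'.1, h'.2.1, h'.2.2.trans ?_⟩
      split_ifs with h2
      · subst h2; omega
      · exact le_rfl
    · rintro ⟨rfl, rfl⟩
      exact h ⟨h1, by omega, le_rfl⟩
  · rw [if_neg (by rintro ⟨rfl, rfl⟩; omega)]
    split_ifs with h
    · obtain ⟨rfl, hce⟩ := h
      obtain ⟨b', hb', e1, e2⟩ := t1 m' c h1' hc' (by simp; omega)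
      have := hb b' hb'
      omega
    · refine t3 m' c h1' hc' ?_
      split_ifs with h2
      · subst h2
        simp only [true_and] at h
        omega
      · exact hcm
  · have hle : c ≤ μ m' := hcm.trans (hμ m' h1')
    rw [if_neg (by rintro ⟨rfl, rfl⟩; omega)]
    split_ifs with h
    · obtain ⟨h, hce⟩ := h
      obtain ⟨b', hb', e1, e2⟩ := t1 m' c h1' hc' (by rw [if_neg (by omega)]; exact hle)
      have := hb b' hb'
      omega
    · refine t4 m' c h1' hc' ?_
      split_ifs with h2
      · subst h2
        simp only [true_and] at h
        omega
      · exact hcm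

/-- Erasing from a tableau the corner sitting on the last box. -/
lemma BoxTab.erase {T : ℕ × ℕ → ℕ} (hμ : ∀ m, 1 ≤ m → μ (m + 1) ≤ μ m)
    (hb : ∀ b' ∈ B, q b' < q b ∨ (q b' = q b ∧ r b' < r b))
    {m : ℕ} (h1 : 1 ≤ m) (hc : μ (m + 1) < μ m) (hm : μ m + r b = m + q b)
    (hT : BoxTab r q (b :: B) μ T) :
    BoxTab r q B (Function.update μ m (μ m - 1)) (Function.update T (m, μ m) 0) := by
  have hcell : ∀ m' c, c ≤ Function.update μ m (μ m - 1) m' →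
      c ≤ μ m' ∧ (1 ≤ c → ¬ (m' = m ∧ c = μ m)) := by
    intro m' c h
    rw [Function.update_apply] at h
    split_ifs at h with h2
    · subst h2; omega
    · exact ⟨h, fun _ h' => h2 h'.1⟩
  have hT' := hT
  obtain ⟨t1, t2, t3, t4⟩ := hT'
  refine ⟨fun m' c h1' hc' hcm => ?_, fun m' c h => ?_, fun m' c h1' hc' hcm => ?_,
    fun m' c h1' hc' hcm => ?_⟩
  · obtain ⟨h3, h4⟩ := hcell m' c hcm
    have h4 := h4 hc'
    simp only [Function.update_apply, Prod.mk.injEq, if_neg h4]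
    obtain ⟨b', hb', e1, e2⟩ := t1 m' c h1' hc' h3
    rcases List.mem_cons.1 hb' with rfl | hb'
    · obtain ⟨k1, k2⟩ := hT.corner hb h1' hc' h3 e1 e2
      have := corner_unique hμ h1' h1 (by omega)
      subst this
      exact absurd ⟨rfl, k1⟩ h4
    · exact ⟨b', hb', e1, e2⟩
  · rw [Function.update_apply]
    split_ifs with h2
    · rfl
    · refine t2 m' c fun h3 => h ⟨h3.1, h3.2.1, ?_⟩
      rw [Function.update_apply]
      rw [Prod.mk.injEq] at h2
      split_ifs with h4
      · subst h4
        simp only [true_and] at h2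
        omega
      · exact h3.2.2
  · obtain ⟨h3, h4⟩ := hcell m' _ hcm
    have h4 := h4 (by omega)
    have h5 := (hcell m' c (by omega)).2 hc'
    simp only [Function.update_apply, Prod.mk.injEq, if_neg h4, if_neg h5]
    exact t3 m' c h1' hc' h3
  · obtain ⟨h3, h4⟩ := hcell _ c hcm
    have h4 := h4 hc'
    have h5 := (hcell m' c (hcm.trans (update_part hμ hc m' h1'))).2 hc'
    simp only [Function.update_apply, Prod.mk.injEq, if_neg h4, if_neg h5]
    exact t4 m' c h1' hc' h3

/-- Chains and tableaux are equinumerous: both satisfy the recursion that either leaves out the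
last box of the list, or uses it for the unique corner of its content and removes that corner. -/
theorem encard_chains (r q : β → ℕ) (B : List β)
    (hB : B.Pairwise fun b b' => q b' < q b ∨ (q b' = q b ∧ r b' < r b)) :
    ∀ μ : ℕ → ℕ, (∀ m, 1 ≤ m → μ (m + 1) ≤ μ m) →
    {P : Finset β | P ⊆ B.toFinset ∧ ChainTo r q (B.filter (· ∈ P)) μ}.encard =
      {T | BoxTab r q B μ T}.encard := by
  induction B with
  | nil =>
    intro μ hμ
    by_cases h : ∀ m, 1 ≤ m → μ m = 0
    · have e1 : {P : Finset β | P ⊆ ([] : List β).toFinset ∧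
          ChainTo r q (([] : List β).filter (· ∈ P)) μ} = {∅} := by
        ext P
        simp only [List.filter_nil, ChainTo, Set.mem_ofPred_eq, Set.mem_singleton_iff,
          List.toFinset_nil, Finset.subset_empty]
        exact and_iff_left h
      have e2 : {T | BoxTab r q ([] : List β) μ T} = {0} := by
        ext T
        simp only [Set.mem_ofPred_eq, Set.mem_singleton_iff]
        constructor
        · intro hT
          funext ⟨m, c⟩
          refine hT.2.1 m c fun h' => ?_
          have := h m h'.1
          omega
        · rintro rfl
          refine ⟨fun m c h1 _ _ => ?_, fun _ _ _ => rfl, fun _ _ _ _ _ => le_rfl,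
            fun m c h1 _ _ => ?_⟩
          · have := h m h1
            omega
          · have := h (m + 1) (by omega)
            omega
      rw [e1, e2, Set.encard_singleton, Set.encard_singleton]
    · have e1 : {P : Finset β | P ⊆ ([] : List β).toFinset ∧
          ChainTo r q (([] : List β).filter (· ∈ P)) μ} = ∅ := by
        ext P
        simp only [List.filter_nil, ChainTo, Set.mem_ofPred_eq, Set.mem_empty_iff_false, iff_false,
          not_and]
        exact fun _ => h
      have e2 : {T | BoxTab r q ([] : List β) μ T} = ∅ := by
        ext T
        simp only [Set.mem_ofPred_eq, Set.mem_empty_iff_false, iff_false]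
        intro hT
        push Not at h
        obtain ⟨m, h1, h2⟩ := h
        obtain ⟨b, hb, _⟩ := hT.1 m 1 h1 le_rfl (by omega)
        simp at hb
      rw [e1, e2, Set.encard_empty, Set.encard_empty]
  | cons b B ih =>
    intro μ hμ
    obtain ⟨hb, hB'⟩ := List.pairwise_cons.1 hB
    have hbB : b ∉ B := fun h => by have := hb b h; omega
    have ih := ih hB'
    have hnot : ∀ P : Finset β, P ⊆ B.toFinset → b ∉ P := fun P hP h =>
      hbB (by simpa using hP h)
    -- filtering by a set that differs only at `b` does not change the filtered tail
    have hfil : ∀ P : Finset β, B.filter (· ∈ insert b P) = B.filter (· ∈ P) := by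
      intro P
      refine List.filter_congr fun x hx => ?_
      have : x ≠ b := fun h => hbB (h ▸ hx)
      simp [this]
    by_cases h : ∃ m, 1 ≤ m ∧ μ (m + 1) < μ m ∧ μ m + r b = m + q b
    · obtain ⟨m, h1, hc, hm⟩ := h
      have e1 : {P : Finset β | P ⊆ (b :: B).toFinset ∧
            ChainTo r q ((b :: B).filter (· ∈ P)) μ} =
          {P : Finset β | P ⊆ B.toFinset ∧ ChainTo r q (B.filter (· ∈ P)) μ} ∪
          (insert b) '' {P : Finset β | P ⊆ B.toFinset ∧
            ChainTo r q (B.filter (· ∈ P)) (Function.update μ m (μ m - 1))} := by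
        ext P
        simp only [Set.mem_union, Set.mem_ofPred_eq, Set.mem_image]
        constructor
        · rintro ⟨hP, hV⟩
          rw [List.toFinset_cons] at hP
          by_cases hbP : b ∈ P
          · right
            refine ⟨P.erase b, ⟨Finset.subset_insert_iff.1 hP, ?_⟩, Finset.insert_erase hbP⟩
            rw [List.filter_cons_of_pos (by simpa using hbP)] at hV
            obtain ⟨m', h1', hc', hm', hV⟩ := hV
            obtain rfl := corner_unique hμ h1 h1' (by omega)
            rw [← hfil, Finset.insert_erase hbP]
            exact hV
          · left
            rw [List.filter_cons_of_neg (by simpa using hbP)] at hV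
            exact ⟨(Finset.subset_insert_iff_of_notMem hbP).1 hP, hV⟩
        · rintro (⟨hP, hV⟩ | ⟨P, ⟨hP, hV⟩, rfl⟩)
          · rw [List.filter_cons_of_neg (by simpa using hnot P hP), List.toFinset_cons]
            exact ⟨hP.trans (Finset.subset_insert _ _), hV⟩
          · rw [List.filter_cons_of_pos (by simp), List.toFinset_cons, hfil]
            exact ⟨Finset.insert_subset_insert _ hP, m, h1, hc, hm, hV⟩
      have e2 : {T | BoxTab r q (b :: B) μ T} = {T | BoxTab r q B μ T} ∪
          (fun T => Function.update T (m, μ m) (r b)) ''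
            {T | BoxTab r q B (Function.update μ m (μ m - 1)) T} := by
        ext T
        simp only [Set.mem_union, Set.mem_ofPred_eq, Set.mem_image]
        constructor
        · intro hT
          by_cases hu : ∃ m' c, 1 ≤ m' ∧ 1 ≤ c ∧ c ≤ μ m' ∧ r b = T (m', c) ∧
              q b + m' = T (m', c) + c
          · obtain ⟨m', c, h1', hc', hcm, e1, e2⟩ := hu
            obtain ⟨k1, k2⟩ := hT.corner hb h1' hc' hcm e1 e2
            obtain rfl := corner_unique hμ h1 h1' (by omega)
            right
            refine ⟨_, hT.erase hμ hb h1 hc hm, ?_⟩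
            rw [Function.update_idem, e1, k1, Function.update_eq_self]
          · left
            refine ⟨fun m' c h1' hc' hcm => ?_, hT.2⟩
            obtain ⟨b', hb', k1, k2⟩ := hT.1 m' c h1' hc' hcm
            rcases List.mem_cons.1 hb' with rfl | hb'
            · exact absurd ⟨m', c, h1', hc', hcm, k1, k2⟩ hu
            · exact ⟨b', hb', k1, k2⟩
        · rintro (hT | ⟨T, hT, rfl⟩)
          · exact hT.mono
          · exact hT.extend hμ hb h1 hc hm
      rw [e1, e2, Set.encard_union_eq, Set.encard_union_eq, Set.InjOn.encard_image,
        Set.InjOn.encard_image, ih μ hμ, ih _ (update_part hμ hc)]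
      · intro T hT T' hT' he
        have k : ∀ T, BoxTab r q B (Function.update μ m (μ m - 1)) T → T (m, μ m) = 0 :=
          fun T hT => hT.2.1 _ _ (by simp; omega)
        funext x
        by_cases hx : x = (m, μ m)
        · rw [hx, k T hT, k T' hT']
        · have := congrFun he x
          simpa [Function.update_apply, hx] using this
      · intro P hP P' hP' he
        have := congrArg (fun s => Finset.erase s b) he
        simpa [Finset.erase_insert (hnot P hP.1), Finset.erase_insert (hnot P' hP'.1)] using this
      · rw [Set.disjoint_left]
        rintro _ hT ⟨T, _, rfl⟩
        obtain ⟨b', hb', e1, e2⟩ := hT.1 m (μ m) h1 (by omega) le_rfl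
        simp only [Function.update_self] at e1 e2
        have := hb b' hb'
        omega
      · rw [Set.disjoint_left]
        rintro _ hP ⟨P, _, rfl⟩
        exact hnot _ hP.1 (Finset.mem_insert_self _ _)
    · have e1 : {P : Finset β | P ⊆ (b :: B).toFinset ∧
            ChainTo r q ((b :: B).filter (· ∈ P)) μ} =
          {P : Finset β | P ⊆ B.toFinset ∧ ChainTo r q (B.filter (· ∈ P)) μ} := by
        ext P
        simp only [Set.mem_ofPred_eq]
        constructor
        · rintro ⟨hP, hV⟩
          rw [List.toFinset_cons] at hP
          by_cases hbP : b ∈ P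
          · rw [List.filter_cons_of_pos (by simpa using hbP)] at hV
            obtain ⟨m', h1', hc', hm', hV⟩ := hV
            exact absurd ⟨m', h1', hc', hm'⟩ h
          · rw [List.filter_cons_of_neg (by simpa using hbP)] at hV
            exact ⟨(Finset.subset_insert_iff_of_notMem hbP).1 hP, hV⟩
        · rintro ⟨hP, hV⟩
          rw [List.filter_cons_of_neg (by simpa using hnot P hP), List.toFinset_cons]
          exact ⟨hP.trans (Finset.subset_insert _ _), hV⟩
      have e2 : {T | BoxTab r q (b :: B) μ T} = {T | BoxTab r q B μ T} := by
        ext T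
        simp only [Set.mem_ofPred_eq]
        refine ⟨fun hT => ⟨fun m' c h1' hc' hcm => ?_, hT.2⟩, fun hT => hT.mono⟩
        obtain ⟨b', hb', j1, j2⟩ := hT.1 m' c h1' hc' hcm
        rcases List.mem_cons.1 hb' with rfl | hb'
        · obtain ⟨k1, k2⟩ := hT.corner hb h1' hc' hcm j1 j2
          exact absurd ⟨m', h1', k2, by omega⟩ h
        · exact ⟨b', hb', j1, j2⟩
      rw [e1, e2, ih μ hμ]

end count

/-! ### Length and Demazure products -/

lemma invCount_one : invCount (1 : Equiv.Perm (Fin n)) = 0 := by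
  rw [invCount, Finset.card_eq_zero, Finset.filter_eq_empty_iff]
  rintro p - ⟨h1, h2⟩
  exact absurd h1 (not_lt.2 h2.le)

lemma invCount_inv (u : Equiv.Perm (Fin n)) : invCount u⁻¹ = invCount u := by
  unfold invCount
  refine Finset.card_bij' (fun p _ => (u⁻¹ p.2, u⁻¹ p.1)) (fun p _ => (u p.2, u p.1)) ?_ ?_ ?_ ?_
    <;> rintro ⟨p, p'⟩ hp
  · rw [Finset.mem_filter] at hp ⊢
    exact ⟨Finset.mem_univ _, hp.2.2, by simpa using hp.2.1⟩
  · rw [Finset.mem_filter] at hp ⊢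
    exact ⟨Finset.mem_univ _, hp.2.2, by simpa using hp.2.1⟩
  · simp
  · simp

lemma adjSwap_eq {a : ℕ} (h1 : 1 ≤ a) (h2 : a < n) :
    (adjSwap a : Equiv.Perm (Fin n)) = Equiv.swap ⟨a - 1, by omega⟩ ⟨a, h2⟩ := by
  rw [adjSwap, dif_pos ⟨h1, h2⟩]

lemma adjSwap_mul_self (a : ℕ) : (adjSwap a * adjSwap a : Equiv.Perm (Fin n)) = 1 := by
  unfold adjSwap
  split_ifs
  · exact Equiv.swap_mul_self _ _
  · exact one_mul 1

lemma adjSwap_inv (a : ℕ) : (adjSwap a : Equiv.Perm (Fin n))⁻¹ = adjSwap a :=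
  inv_eq_of_mul_eq_one_left (adjSwap_mul_self a)

lemma adjSwap_val {a : ℕ} (h1 : 1 ≤ a) (h2 : a < n) (i : Fin n) :
    ((adjSwap a i : Fin n) : ℕ) =
      if (i : ℕ) = a then a - 1 else if (i : ℕ) = a - 1 then a else i := by
  rw [adjSwap_eq h1 h2, Equiv.swap_apply_def]
  simp only [Fin.ext_iff, apply_ite Fin.val]
  split_ifs <;> omega

lemma invCount_mul_lt {a : ℕ} (h1 : 1 ≤ a) (h2 : a < n) (u : Equiv.Perm (Fin n))
    (h : u ⟨a - 1, by omega⟩ < u ⟨a, h2⟩) : invCount (u * adjSwap a) = invCount u + 1 := by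
  have key : (Finset.univ : Finset (Fin n × Fin n)).filter
      (fun p => p.1 < p.2 ∧
        (u * adjSwap a : Equiv.Perm (Fin n)) p.2 < (u * adjSwap a : Equiv.Perm (Fin n)) p.1) =
      insert (⟨a - 1, by omega⟩, ⟨a, h2⟩)
        (((Finset.univ : Finset (Fin n × Fin n)).filter
          (fun p => p.1 < p.2 ∧ u p.2 < u p.1)).map
            ((adjSwap a).prodCongr (adjSwap a)).toEmbedding) := by
    ext ⟨x, y⟩
    rw [Finset.mem_filter, Finset.mem_insert, Finset.mem_map_equiv, Finset.mem_filter]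
    simp only [Finset.mem_univ, true_and, Equiv.Perm.mul_apply, Prod.mk.injEq, Equiv.prodCongr_symm,
      Equiv.prodCongr_apply, Prod.map_apply]
    have hs : (adjSwap a : Equiv.Perm (Fin n)).symm = adjSwap a := adjSwap_inv a
    rw [hs]
    have vx := adjSwap_val h1 h2 x
    have vy := adjSwap_val h1 h2 y
    constructor
    · rintro ⟨hxy, hu⟩
      by_cases hp : (x : ℕ) = a - 1 ∧ (y : ℕ) = a
      · exact Or.inl ⟨Fin.ext hp.1, Fin.ext hp.2⟩
      · refine Or.inr ⟨?_, hu⟩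
        rw [Fin.lt_def] at hxy ⊢
        split_ifs at vx vy <;> omega
    · rintro (⟨rfl, rfl⟩ | ⟨hxy, hu⟩)
      · refine ⟨by rw [Fin.lt_def]; simp; omega, ?_⟩
        rw [adjSwap_eq h1 h2, Equiv.swap_apply_left, Equiv.swap_apply_right]
        exact h
      · refine ⟨?_, hu⟩
        by_cases hp : (x : ℕ) = a ∧ (y : ℕ) = a - 1
        · exfalso
          have e1 : adjSwap a x = (⟨a - 1, by omega⟩ : Fin n) :=
            Fin.ext (by rw [vx, if_pos hp.1])
          have e2 : adjSwap a y = (⟨a, h2⟩ : Fin n) :=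
            Fin.ext (by rw [vy, if_neg (by omega), if_pos hp.2])
          rw [e1, e2] at hu
          exact lt_asymm h hu
        · rw [Fin.lt_def] at hxy ⊢
          split_ifs at vx vy <;> omega
  unfold invCount
  rw [key, Finset.card_insert_of_notMem, Finset.card_map]
  simp only [Finset.mem_map_equiv, Finset.mem_filter, Finset.mem_univ, true_and]
  have hs : (adjSwap a : Equiv.Perm (Fin n)).symm = adjSwap a := adjSwap_inv a
  simp only [Equiv.prodCongr_symm, hs, Equiv.prodCongr_apply, Prod.map_apply]
  rw [adjSwap_eq h1 h2, Equiv.swap_apply_left, Equiv.swap_apply_right]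
  rintro ⟨h3, -⟩
  rw [Fin.lt_def] at h3
  simp only at h3
  omega

lemma invCount_mul_gt {a : ℕ} (h1 : 1 ≤ a) (h2 : a < n) (u : Equiv.Perm (Fin n))
    (h : u ⟨a, h2⟩ < u ⟨a - 1, by omega⟩) : invCount (u * adjSwap a) + 1 = invCount u := by
  have := invCount_mul_lt h1 h2 (u * adjSwap a) (by
    rw [Equiv.Perm.mul_apply, Equiv.Perm.mul_apply, adjSwap_eq h1 h2, Equiv.swap_apply_left,
      Equiv.swap_apply_right]
    exact h)
  rw [mul_assoc, adjSwap_mul_self, mul_one] at this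
  exact this.symm

lemma invCount_mul_le (a : ℕ) (u : Equiv.Perm (Fin n)) :
    invCount (u * adjSwap a) ≤ invCount u + 1 := by
  by_cases h : 1 ≤ a ∧ a < n
  · rcases lt_trichotomy (u ⟨a - 1, by omega⟩) (u ⟨a, h.2⟩) with hlt | heq | hlt
    · exact (invCount_mul_lt h.1 h.2 u hlt).le
    · have := u.injective heq
      rw [Fin.ext_iff] at this
      simp only at this
      omega
    · have := invCount_mul_gt h.1 h.2 u hlt
      omega
  · rw [adjSwap, dif_neg h, mul_one]
    omega

lemma invCount_adjSwap_mul (a : ℕ) (u : Equiv.Perm (Fin n)) :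
    invCount (adjSwap a * u) = invCount (u⁻¹ * adjSwap a) := by
  rw [← invCount_inv, mul_inv_rev, adjSwap_inv]

/-- The ordinary product of the word of a list of boxes. -/
def wordProd (v : Equiv.Perm (Fin n)) (S : List (ℕ × ℕ)) : Equiv.Perm (Fin n) :=
  (S.map fun b => adjSwap (canonLabel v b)).prod

lemma invCount_wordProd_le (v : Equiv.Perm (Fin n)) (S : List (ℕ × ℕ)) :
    invCount (wordProd v S) ≤ S.length := by
  induction S using List.reverseRecOn with
  | nil => simp [wordProd, invCount_one]
  | append_singleton S b ih =>
    have : wordProd v (S ++ [b]) = wordProd v S * adjSwap (canonLabel v b) := by simp [wordProd]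
    rw [this, List.length_append, List.length_singleton]
    exact (invCount_mul_le _ _).trans (by omega)

/-- The Demazure product never exceeds the number of letters in length, and coincides with the
ordinary product as soon as one of the two is that long, i.e. the word is reduced. -/
lemma demazure_aux (v : Equiv.Perm (Fin n)) (S : List (ℕ × ℕ)) :
    invCount (S.foldl (demStep v) 1) ≤ S.length ∧
    (invCount (S.foldl (demStep v) 1) = S.length ∨ invCount (wordProd v S) = S.length →
      S.foldl (demStep v) 1 = wordProd v S) := by
  induction S using List.reverseRecOn with
  | nil => simp [wordProd, invCount_one]
  | append_singleton S b ih =>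
    have hw : wordProd v (S ++ [b]) = wordProd v S * adjSwap (canonLabel v b) := by
      simp [wordProd]
    rw [hw, List.foldl_append, List.foldl_cons, List.foldl_nil, List.length_append,
      List.length_singleton]
    set d := S.foldl (demStep v) 1
    have k1 := invCount_mul_le (canonLabel v b) d
    have k2 := invCount_mul_le (canonLabel v b) (wordProd v S)
    have k3 := invCount_wordProd_le v S
    unfold demStep
    split_ifs with h
    · refine ⟨by omega, fun h' => ?_⟩
      rw [ih.2 (by omega)]
    · refine ⟨by omega, fun h' => ?_⟩
      have e : d = wordProd v S := ih.2 (by omega)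
      rw [e] at h
      omega

lemma reduced_iff (v x : Equiv.Perm (Fin n)) (S : List (ℕ × ℕ)) :
    (S.foldl (demStep v) 1 = x ∧ S.length = invCount x) ↔
      (wordProd v S = x ∧ S.length = invCount x) := by
  have h := (demazure_aux v S).2
  constructor
  · rintro ⟨rfl, h2⟩
    exact ⟨(h (Or.inl h2.symm)).symm, h2⟩
  · rintro ⟨rfl, h2⟩
    exact ⟨h (Or.inr h2.symm), h2⟩

/-! ### Grassmannian permutations as partitions -/

/-- `x` is increasing on the positions `≥ k`, and on the positions `< k` it is given by the
partition `μ` with at most `k` parts. -/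
structure Grass (k : ℕ) (x : Equiv.Perm (Fin n)) (μ : ℕ → ℕ) : Prop where
  le : k ≤ n
  val : ∀ j : Fin n, (j : ℕ) < k → (x j : ℕ) = j + μ (k - j)
  incr : ∀ i j : Fin n, k ≤ (i : ℕ) → i < j → x i < x j
  anti : ∀ m, 1 ≤ m → μ (m + 1) ≤ μ m
  zero : ∀ m, k < m → μ m = 0

lemma Grass.incr' {k : ℕ} {x : Equiv.Perm (Fin n)} {μ : ℕ → ℕ} (h : Grass k x μ)
    {i j : Fin n} (hj : (j : ℕ) < k) (hij : i < j) : x i < x j := by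
  rw [Fin.lt_def] at hij ⊢
  rw [h.val i (by omega), h.val j hj]
  have := part_anti h.anti (m := k - j) (m' := k - i) (by omega) (by omega)
  omega

lemma Grass.eq_one_iff {k : ℕ} {x : Equiv.Perm (Fin n)} {μ : ℕ → ℕ} (h : Grass k x μ) :
    x = 1 ↔ ∀ m, 1 ≤ m → μ m = 0 := by
  constructor
  · rintro rfl m hm
    by_cases hk : k < m
    · exact h.zero m hk
    · have hn := h.le
      have := h.val ⟨k - m, by omega⟩ (by simp; omega)
      simp only [Equiv.Perm.one_apply] at this
      rw [show k - (k - m) = m by omega] at this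
      omega
  · intro h0
    have hv : ∀ j : Fin n, (j : ℕ) < k → x j = j := fun j hj => Fin.ext (by
      rw [h.val j hj, h0 _ (by omega), add_zero])
    have hmono : StrictMono x := by
      intro i j hij
      by_cases hi : k ≤ (i : ℕ)
      · exact h.incr i j hi hij
      · by_cases hj : (j : ℕ) < k
        · exact h.incr' hj hij
        · rw [hv i (by omega)]
          by_contra hlt
          have hlt' : ((x j : Fin n) : ℕ) < k := by
            have := Fin.le_def.1 (not_lt.1 hlt)
            omega
          have := x.injective (hv (x j) hlt')
          rw [this] at hlt'
          exact hj hlt'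
    have : (x : Fin n → Fin n) = id :=
      (hmono.range_inj strictMono_id).1 (by simp [x.surjective.range_eq])
    ext j
    rw [this]; rfl

/-- Left multiplication by the adjacent transposition of a corner of `μ` removes this corner. -/
lemma Grass.remove {k : ℕ} {x : Equiv.Perm (Fin n)} {μ : ℕ → ℕ} (h : Grass k x μ) {a m : ℕ}
    (h1 : 1 ≤ a) (h2 : a < n) (hm : 1 ≤ m) (hc : μ (m + 1) < μ m) (ha : a + m = k + μ m) :
    Grass k (adjSwap a * x) (Function.update μ m (μ m - 1)) ∧
      invCount (adjSwap a * x) + 1 = invCount x := by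
  have hmk : m ≤ k := by
    by_contra hk
    have := h.zero m (by omega)
    omega
  have hn := h.le
  obtain ⟨j, hj⟩ : ∃ j : Fin n, (j : ℕ) = k - m := ⟨⟨k - m, by omega⟩, rfl⟩
  have hxj : (x j : ℕ) = a := by
    rw [h.val j (by omega), hj, show k - (k - m) = m by omega]
    omega
  obtain ⟨p, hp⟩ : ∃ p : Fin n, x p = ⟨a - 1, by omega⟩ := x.surjective _
  have hxp : (x p : ℕ) = a - 1 := by rw [hp]
  have hpk : k ≤ (p : ℕ) := by
    by_contra hpk
    have hpj : (p : ℕ) < j := by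
      by_contra hle
      rcases (not_lt.1 hle).eq_or_lt with he | hlt
      · have : p = j := Fin.ext he.symm
        rw [this] at hxp
        omega
      · have := Fin.lt_def.1 (h.incr' (not_le.1 hpk) (Fin.lt_def.2 hlt))
        omega
    have hv := h.val p (by omega)
    have := part_anti h.anti (m := m + 1) (m' := k - p) (by omega) (by omega)
    omega
  have hother : ∀ i : Fin n, i ≠ j → i ≠ p → ((adjSwap a * x : Equiv.Perm (Fin n)) i : Fin n) = x i := by
    intro i hij hip
    refine Fin.ext ?_
    have e1 : (x i : ℕ) ≠ a := fun he => hij (x.injective (Fin.ext (he.trans hxj.symm)))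
    have e2 : (x i : ℕ) ≠ a - 1 := fun he => hip (x.injective (Fin.ext (he.trans hxp.symm)))
    rw [Equiv.Perm.mul_apply, adjSwap_val h1 h2, if_neg e1, if_neg e2]
  have hat_j : ((adjSwap a * x : Equiv.Perm (Fin n)) j : ℕ) = a - 1 := by
    rw [Equiv.Perm.mul_apply, adjSwap_val h1 h2, if_pos hxj]
  have hat_p : ((adjSwap a * x : Equiv.Perm (Fin n)) p : ℕ) = a := by
    rw [Equiv.Perm.mul_apply, adjSwap_val h1 h2, if_neg (by omega), if_pos hxp]
  refine ⟨⟨hn, ?_, ?_, update_part h.anti hc, ?_⟩, ?_⟩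
  · intro i hi
    by_cases hij : i = j
    · subst hij
      rw [hat_j, hj, show k - (k - m) = m by omega, Function.update_self]
      omega
    · have hij' : (i : ℕ) ≠ j := fun he => hij (Fin.ext he)
      rw [hother i hij (by rintro rfl; omega), h.val i hi, Function.update_of_ne (by omega)]
  · intro i i' hi hii
    have hii' := Fin.lt_def.1 hii
    have hlt := Fin.lt_def.1 (h.incr i i' hi hii)
    have hij : i ≠ j := by rintro rfl; omega
    have hij' : i' ≠ j := by rintro rfl; omega
    rw [Fin.lt_def]
    by_cases hip : i = p
    · subst hip
      rw [hat_p, hother i' hij' hii.ne']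
      have : (x i' : ℕ) ≠ a := fun he => hij' (x.injective (Fin.ext (he.trans hxj.symm)))
      omega
    · rw [hother i hij hip]
      by_cases hip' : i' = p
      · subst hip'
        rw [hat_p]
        omega
      · rw [hother i' hij' hip']
        exact hlt
  · intro t ht
    rw [Function.update_of_ne (by omega)]
    exact h.zero t ht
  · rw [invCount_adjSwap_mul, invCount_mul_gt h1 h2, invCount_inv]
    have e1 : x⁻¹ ⟨a, h2⟩ = j := by
      rw [Equiv.Perm.inv_eq_iff_eq]; exact Fin.ext hxj.symm
    have e2 : x⁻¹ ⟨a - 1, by omega⟩ = p := by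
      rw [Equiv.Perm.inv_eq_iff_eq]; exact hp.symm
    rw [e1, e2, Fin.lt_def]
    omega

/-- Every left descent of a Grassmannian permutation comes from a corner of its partition. -/
lemma Grass.corner_of_descent {k : ℕ} {x : Equiv.Perm (Fin n)} {μ : ℕ → ℕ} (h : Grass k x μ)
    {a : ℕ} (h1 : 1 ≤ a) (h2 : a < n) (hlt : invCount (adjSwap a * x) < invCount x) :
    ∃ m, 1 ≤ m ∧ μ (m + 1) < μ m ∧ a + m = k + μ m := by
  obtain ⟨j, hj⟩ : ∃ j : Fin n, x j = ⟨a, h2⟩ := x.surjective _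
  obtain ⟨p, hp⟩ : ∃ p : Fin n, x p = ⟨a - 1, by omega⟩ := x.surjective _
  have hxj : (x j : ℕ) = a := by rw [hj]
  have hxp : (x p : ℕ) = a - 1 := by rw [hp]
  have hjp : j < p := by
    by_contra hle
    have e1 : x⁻¹ ⟨a, h2⟩ = j := by
      rw [Equiv.Perm.inv_eq_iff_eq]; exact hj.symm
    have e2 : x⁻¹ ⟨a - 1, by omega⟩ = p := by
      rw [Equiv.Perm.inv_eq_iff_eq]; exact hp.symm
    rcases (not_lt.1 hle).eq_or_lt with he | hlt'
    · subst he
      omega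
    · rw [invCount_adjSwap_mul, invCount_mul_lt h1 h2 _ (by rw [e1, e2]; exact hlt'),
        invCount_inv] at hlt
      omega
  have hjk : (j : ℕ) < k := by
    by_contra hk
    have := Fin.lt_def.1 (h.incr j p (by omega) hjp)
    omega
  have hv := h.val j hjk
  refine ⟨k - j, by omega, ?_, by omega⟩
  rcases Nat.eq_zero_or_pos (j : ℕ) with h0 | h0
  · rw [h.zero (k - j + 1) (by omega)]
    omega
  · obtain ⟨i, hi⟩ : ∃ i : Fin n, (i : ℕ) = j - 1 := ⟨⟨j - 1, by omega⟩, rfl⟩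
    have hvi := h.val i (by omega)
    have hlt1 := Fin.lt_def.1 (h.incr' hjk (Fin.lt_def.2 (show (i : ℕ) < j by omega)))
    have hne : (x i : ℕ) ≠ a - 1 := fun he => by
      have : i = p := x.injective (Fin.ext (he.trans hxp.symm))
      subst this
      rw [Fin.lt_def] at hjp
      omega
    rw [show k - (i : ℕ) = k - j + 1 by omega] at hvi
    omega

/-- A word is reduced for a Grassmannian permutation exactly when it adds the cells of the
partition one at a time. -/
lemma chain_iff (v : Equiv.Perm (Fin n)) (k : ℕ) (r q : ℕ × ℕ → ℕ) (S : List (ℕ × ℕ)) :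
    (∀ b ∈ S, 1 ≤ canonLabel v b ∧ canonLabel v b < n ∧ canonLabel v b + r b = k + q b) →
    ∀ (x : Equiv.Perm (Fin n)) (μ : ℕ → ℕ), Grass k x μ →
    (ChainTo r q S μ ↔ (wordProd v S = x ∧ S.length = invCount x)) := by
  induction S with
  | nil =>
    intro _ x μ h
    simp only [ChainTo, wordProd, List.map_nil, List.prod_nil, List.length_nil]
    rw [← h.eq_one_iff]
    constructor
    · rintro rfl
      exact ⟨rfl, invCount_one.symm⟩
    · exact fun h => h.1.symm
  | cons b S ih =>
    intro hS x μ h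
    obtain ⟨h1, h2, hl⟩ := hS b (by simp)
    have ih := ih fun b' hb' => hS b' (List.mem_cons_of_mem _ hb')
    set a := canonLabel v b with ha
    have hw : wordProd v (b :: S) = adjSwap a * wordProd v S := by simp [wordProd, ha]
    have hcancel : adjSwap a * wordProd v S = x ↔ wordProd v S = adjSwap a * x := by
      constructor
      · rintro rfl
        rw [← mul_assoc, adjSwap_mul_self, one_mul]
      · intro e
        rw [e, ← mul_assoc, adjSwap_mul_self, one_mul]
    rw [hw, hcancel, List.length_cons]
    constructor
    · rintro ⟨m, hm, hc, hmm, hV⟩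
      obtain ⟨g1, g2⟩ := h.remove h1 h2 hm hc (by omega)
      obtain ⟨e1, e2⟩ := (ih _ _ g1).1 hV
      exact ⟨e1, by omega⟩
    · rintro ⟨e1, e2⟩
      have hle := invCount_wordProd_le v S
      rw [e1] at hle
      obtain ⟨m, hm, hc, hmm⟩ := h.corner_of_descent h1 h2 (by omega)
      obtain ⟨g1, g2⟩ := h.remove h1 h2 hm hc hmm
      exact ⟨m, hm, hc, by omega, (ih _ _ g1).2 ⟨e1, by omega⟩⟩

/-! ### The Rothe diagram of a co-Grassmannian permutation -/

lemma permVal_lt (v : Equiv.Perm (Fin n)) {t : ℕ} (h : t < n) : permVal v t < n := by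
  rw [permVal, dif_pos h]; exact Fin.is_lt _

lemma permVal_inj (v : Equiv.Perm (Fin n)) {s t : ℕ} (hs : s < n) (ht : t < n)
    (h : permVal v s = permVal v t) : s = t := by
  rw [permVal, dif_pos hs, permVal, dif_pos ht] at h
  simpa using v.injective (Fin.ext h)

lemma permVal_symm (v : Equiv.Perm (Fin n)) {t : ℕ} (h : t < n) :
    permVal v (permVal v.symm t) = t ∧ permVal v.symm (permVal v t) = t := by
  constructor <;> simp [permVal, h]

lemma card_gt (v : Equiv.Perm (Fin n)) (a : ℕ) :
    ((Finset.range n).filter fun t => a < permVal v t).card = n - 1 - a := by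
  rw [show n - 1 - a = (Finset.Ioo a n).card by rw [Nat.card_Ioo]; omega]
  refine Finset.card_nbij (permVal v) ?_ ?_ ?_
  · intro t ht
    rw [Finset.mem_coe, Finset.mem_filter, Finset.mem_range] at ht
    exact Finset.mem_coe.2 <| Finset.mem_Ioo.2 ⟨ht.2, permVal_lt v ht.1⟩
  · intro s hs t ht h
    rw [Finset.mem_coe, Finset.mem_filter, Finset.mem_range] at hs ht
    exact permVal_inj v hs.1 ht.1 h
  · intro c hc
    rw [Finset.mem_coe, Finset.mem_Ioo] at hc
    refine ⟨permVal v.symm c, ?_, (permVal_symm v hc.2).1⟩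
    rw [Finset.mem_coe, Finset.mem_filter, Finset.mem_range, (permVal_symm v hc.2).1]
    exact ⟨permVal_lt _ hc.2, hc.1⟩

section coGrass

variable {v : Equiv.Perm (Fin n)} {k0 : ℕ}

lemma UniqueAscentAt.dec (hv : UniqueAscentAt v k0) {i j : ℕ} (hij : i < j) (hj : j < n)
    (h : j < k0 ∨ k0 ≤ i) : permVal v j < permVal v i := by
  obtain ⟨-, -, -, hd⟩ := hv
  induction j, hij using Nat.le_induction with
  | base => exact hd (i + 1) (by omega) hj (by omega)
  | succ t ht ih =>
    exact (hd (t + 1) (by omega) hj (by omega)).trans (ih (by omega) (by omega))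

lemma UniqueAscentAt.bound (hv : UniqueAscentAt v k0) {j : ℕ} (hj : j < k0) :
    permVal v j + j + 1 ≤ n := by
  have hk := hv.2.1
  induction j with
  | zero => have := permVal_lt v (t := 0) (by omega); omega
  | succ t ih =>
    have := ih (by omega)
    have := hv.dec (show t < t + 1 by omega) (by omega) (Or.inl hj)
    omega

lemma UniqueAscentAt.lamPart_eq (hv : UniqueAscentAt v k0) {j : ℕ} (hj : j < k0) :
    lamPart v k0 (k0 - j) + permVal v j + j + 1 = n := by
  have := hv.bound hj
  rw [lamPart, if_pos (by omega), show k0 - (k0 - j) = j by omega]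
  omega

lemma lamPart_of_gt {m : ℕ} (h : k0 < m) : lamPart v k0 m = 0 := by
  rw [lamPart, if_neg (by omega)]

lemma UniqueAscentAt.lamPart_anti (hv : UniqueAscentAt v k0) :
    ∀ m, 1 ≤ m → lamPart v k0 (m + 1) ≤ lamPart v k0 m := by
  intro m hm
  have hk := hv.2.1
  rcases lt_or_ge k0 (m + 1) with h | h
  · rw [lamPart_of_gt h]; omega
  · have e1 := hv.lamPart_eq (j := k0 - m) (by omega)
    have e2 := hv.lamPart_eq (j := k0 - (m + 1)) (by omega)
    have := hv.dec (i := k0 - (m + 1)) (j := k0 - m) (by omega) (by omega) (by omega)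
    rw [show k0 - (k0 - m) = m by omega] at e1
    rw [show k0 - (k0 - (m + 1)) = m + 1 by omega] at e2
    omega

/-- The entries after the ascent exceeding `v j` occupy an initial segment of positions, whose
length is the part of `λ(v)` attached to `j`. -/
lemma UniqueAscentAt.lt_iff (hv : UniqueAscentAt v k0) {j p : ℕ} (hj : j < k0) (hp : k0 ≤ p)
    (hpn : p < n) : permVal v j < permVal v p ↔ p < k0 + lamPart v k0 (k0 - j) := by
  have hl := hv.lamPart_eq hj
  have hc := card_gt v (permVal v j)
  constructor
  · intro h
    have hsub : Finset.range j ∪ Finset.Icc k0 p ⊆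
        (Finset.range n).filter fun t => permVal v j < permVal v t := by
      intro t ht
      simp only [Finset.mem_union, Finset.mem_range, Finset.mem_Icc, Finset.mem_filter] at ht ⊢
      refine ⟨by omega, ?_⟩
      rcases ht with ht | ht
      · exact hv.dec ht (by omega) (Or.inl hj)
      · rcases ht.2.eq_or_lt with rfl | hlt
        · exact h
        · exact h.trans (hv.dec hlt hpn (Or.inr ht.1))
    have := Finset.card_le_card hsub
    rw [hc, Finset.card_union_of_disjoint, Finset.card_range, Nat.card_Icc] at this
    · omega
    · rw [Finset.disjoint_left]
      intro t h1 h2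
      rw [Finset.mem_range] at h1
      rw [Finset.mem_Icc] at h2
      omega
  · intro h
    by_contra hlt
    have hsub : ((Finset.range n).filter fun t => permVal v j < permVal v t) ⊆
        Finset.range j ∪ Finset.Ico k0 p := by
      intro t ht
      simp only [Finset.mem_union, Finset.mem_range, Finset.mem_Ico, Finset.mem_filter] at ht ⊢
      by_contra hcon
      rcases lt_trichotomy j t with h1 | rfl | h1
      · by_cases htk : t < k0
        · have := hv.dec h1 ht.1 (Or.inl htk)
          omega
        · rcases eq_or_lt_of_le (show p ≤ t by omega) with rfl | h2
          · omega
          · have := hv.dec h2 ht.1 (Or.inr hp)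
            omega
      · omega
      · omega
    have := (Finset.card_le_card hsub).trans (Finset.card_union_le _ _)
    rw [hc, Finset.card_range, Nat.card_Ico] at this
    omega

lemma UniqueAscentAt.lamPart_le (hv : UniqueAscentAt v k0) {j : ℕ} (hj : j < k0) :
    k0 + lamPart v k0 (k0 - j) ≤ n := by
  have hk := hv.2.1
  by_contra hlt
  -- otherwise all positions after the ascent, and those before `j`, carry entries above `v j`
  have hl := hv.lamPart_eq hj
  have hc := card_gt v (permVal v j)
  have hsub : ((Finset.range n).filter fun t => permVal v j < permVal v t) ⊆
      Finset.range j ∪ Finset.Ico k0 n := by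
    intro t ht
    simp only [Finset.mem_union, Finset.mem_range, Finset.mem_Ico, Finset.mem_filter] at ht ⊢
    by_contra hcon
    rcases eq_or_lt_of_le (show j ≤ t by omega) with rfl | h1
    · omega
    · have := hv.dec h1 ht.1 (Or.inl (by omega))
      omega
  have := (Finset.card_le_card hsub).trans (Finset.card_union_le _ _)
  rw [hc, Finset.card_range, Nat.card_Ico] at this
  omega

/-- The 1-based index, counted from the right, of the column of a box. -/
def boxR (k0 : ℕ) (b : ℕ × ℕ) : ℕ := k0 - b.2

/-- The 1-based index of the row of a box among the nonempty rows of `D(v)`, counted from the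
bottom; the row `b.1` corresponds to the position of the entry `n - 1 - b.1`. -/
def boxQ (v : Equiv.Perm (Fin n)) (k0 : ℕ) (b : ℕ × ℕ) : ℕ := permVal v.symm (n - 1 - b.1) + 1 - k0

lemma UniqueAscentAt.mem_rothe (hv : UniqueAscentAt v k0) (b : ℕ × ℕ) :
    b ∈ Rothe v ↔ ∃ p, k0 ≤ p ∧ p < n ∧ b.2 < k0 ∧ b.1 + permVal v p + 1 = n ∧
      permVal v b.2 < permVal v p := by
  have hk := hv.2.1
  obtain ⟨i, j⟩ := b
  simp only [Rothe, Finset.mem_filter, Finset.mem_product, Finset.mem_range]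
  constructor
  · rintro ⟨⟨h1, h2⟩, h3, h4⟩
    have hlt : n - 1 - i < n := by omega
    have e := (permVal_symm v hlt).1
    have hp := permVal_lt v.symm hlt
    set p := permVal v.symm (n - 1 - i)
    have key : ¬ (p < k0 ∨ k0 ≤ j) := fun h => by
      have := hv.dec h4 hp h
      omega
    exact ⟨p, by omega, hp, by omega, by omega, by omega⟩
  · rintro ⟨p, hp, hpn, hj, hi, hlt⟩
    have e := (permVal_symm v hpn).2
    rw [show n - 1 - i = permVal v p by omega, e]
    omega

lemma boxQ_eq {b : ℕ × ℕ} {p : ℕ} (hpn : p < n) (h : b.1 + permVal v p + 1 = n) :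
    boxQ v k0 b = p + 1 - k0 := by
  rw [boxQ, show n - 1 - b.1 = permVal v p by omega, (permVal_symm v hpn).2]

/-- Deleting the empty rows turns `D(v)` into the diagram of `λ(v)`. -/
lemma UniqueAscentAt.exists_box_iff (hv : UniqueAscentAt v k0) (r q : ℕ) :
    (∃ b ∈ Rothe v, boxR k0 b = r ∧ boxQ v k0 b = q) ↔
      1 ≤ r ∧ r ≤ k0 ∧ 1 ≤ q ∧ q ≤ lamPart v k0 r := by
  constructor
  · rintro ⟨b, hb, rfl, rfl⟩
    obtain ⟨p, hp, hpn, hj, hi, hlt⟩ := (hv.mem_rothe b).1 hb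
    rw [boxQ_eq hpn hi]
    rw [hv.lt_iff hj hp hpn] at hlt
    simp only [boxR]
    omega
  · rintro ⟨h1, h2, h3, h4⟩
    have hj : k0 - r < k0 := by omega
    have hle := hv.lamPart_le hj
    have hp : k0 ≤ k0 + q - 1 := by omega
    have hlt := hv.lt_iff hj hp
    rw [show k0 - (k0 - r) = r by omega] at hle hlt
    have hpn : k0 + q - 1 < n := by omega
    have hval := permVal_lt v hpn
    have hi : n - 1 - permVal v (k0 + q - 1) + permVal v (k0 + q - 1) + 1 = n := by omega
    refine ⟨(n - 1 - permVal v (k0 + q - 1), k0 - r), (hv.mem_rothe _).2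
      ⟨k0 + q - 1, hp, hpn, hj, hi, (hlt hpn).2 (by omega)⟩, ?_, ?_⟩
    · simp only [boxR]; omega
    · rw [boxQ_eq hpn hi]; omega

/-- The label of a box is given by its content in `λ(v)`. -/
lemma UniqueAscentAt.label (hv : UniqueAscentAt v k0) {b : ℕ × ℕ} (hb : b ∈ Rothe v) :
    1 ≤ canonLabel v b ∧ canonLabel v b < n ∧ canonLabel v b + boxR k0 b = k0 + boxQ v k0 b := by
  have hk := hv.2.1
  have hbx := (hv.exists_box_iff (boxR k0 b) (boxQ v k0 b)).1 ⟨b, hb, rfl, rfl⟩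
  obtain ⟨p, hp, hpn, hj, hi, hlt⟩ := (hv.mem_rothe b).1 hb
  have hle := hv.lamPart_le hj
  have hq := boxQ_eq (k0 := k0) hpn hi
  have hrow : ((Rothe v).filter fun b' => b'.1 = b.1 ∧ b'.2 ≤ b.2).card =
      ((Finset.range (b.2 + 1)).filter fun t => permVal v t < permVal v p).card := by
    refine Finset.card_nbij (fun b' => b'.2) ?_ ?_ ?_
    · rintro b' hb'
      rw [Finset.mem_coe, Finset.mem_filter] at hb'
      obtain ⟨hb', h1, h2⟩ := hb'
      obtain ⟨p', hp', hpn', hj', hi', hlt'⟩ := (hv.mem_rothe b').1 hb'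
      have : p' = p := permVal_inj v hpn' hpn (by omega)
      subst this
      rw [Finset.mem_coe, Finset.mem_filter, Finset.mem_range]
      exact ⟨Nat.lt_succ_of_le h2, hlt'⟩
    · intro b1 h1 b2 h2 h
      rw [Finset.mem_coe, Finset.mem_filter] at h1 h2
      exact Prod.ext (h1.2.1.trans h2.2.1.symm) h
    · intro t ht
      rw [Finset.mem_coe, Finset.mem_filter, Finset.mem_range] at ht
      refine ⟨(b.1, t), ?_, rfl⟩
      rw [Finset.mem_coe, Finset.mem_filter]
      exact ⟨(hv.mem_rothe _).2 ⟨p, hp, hpn, by simp only; omega, hi, ht.2⟩, rfl,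
        by simp only; omega⟩
  -- entries above `v p` sit before `b.2` or between the ascent and `p`
  have hbig : (Finset.range n).filter (fun t => permVal v p < permVal v t) =
      ((Finset.range (b.2 + 1)).filter fun t => ¬ permVal v t < permVal v p) ∪
        Finset.Ico k0 p := by
    ext t
    simp only [Finset.mem_union, Finset.mem_range, Finset.mem_Ico, Finset.mem_filter]
    constructor
    · rintro ⟨htn, ht⟩
      by_cases h1 : t < k0
      · left
        refine ⟨?_, by omega⟩
        by_contra h2
        have := hv.dec (i := b.2) (j := t) (by omega) htn (Or.inl h1)
        omega
      · right
        refine ⟨by omega, ?_⟩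
        by_contra h2
        rcases eq_or_lt_of_le (show p ≤ t by omega) with rfl | h3
        · omega
        · have := hv.dec h3 htn (Or.inr hp)
          omega
    · rintro (⟨h1, h2⟩ | ⟨h1, h2⟩)
      · refine ⟨by omega, ?_⟩
        have : permVal v t ≠ permVal v p := fun h => by
          have := permVal_inj v (by omega) hpn h
          omega
        omega
      · exact ⟨by omega, hv.dec h2 hpn (Or.inr h1)⟩
  have hcard := card_gt v (permVal v p)
  rw [hbig, Finset.card_union_of_disjoint, Nat.card_Ico] at hcard
  · have hsplit := Finset.card_filter_add_card_filter_not (s := Finset.range (b.2 + 1))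
      (fun t => permVal v t < permVal v p)
    rw [Finset.card_range] at hsplit
    have hlab : canonLabel v b + boxR k0 b = k0 + boxQ v k0 b := by
      rw [canonLabel, hrow, hq, boxR]
      omega
    have hR : boxR k0 b = k0 - b.2 := rfl
    rw [hR] at hbx hlab ⊢
    omega
  · rw [Finset.disjoint_left]
    intro t h1 h2
    rw [Finset.mem_filter, Finset.mem_range] at h1
    rw [Finset.mem_Ico] at h2
    omega

/-- The permutation `w₀ w` is Grassmannian with partition `λ(w)`. -/
lemma UniqueAscentAt.grass (hv : UniqueAscentAt v k0) :
    Grass k0 (longest * v) (lamPart v k0) := by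
  have hk := hv.2.1
  have hval : ∀ j : Fin n, permVal v j = v j := fun j => by simp [permVal]
  have hx : ∀ j : Fin n, (((longest * v : Equiv.Perm (Fin n)) j : Fin n) : ℕ) =
      n - (permVal v j + 1) := fun j => by
    rw [hval]
    exact Fin.val_rev _
  refine ⟨hk.le, fun j hj => ?_, fun i j hi hij => ?_, hv.lamPart_anti,
    fun m => lamPart_of_gt⟩
  · have := hv.lamPart_eq hj
    rw [hx]
    omega
  · rw [Fin.lt_def] at hij ⊢
    have := hv.dec hij j.2 (Or.inr hi)
    have := permVal_lt v i.2
    rw [hx, hx]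
    omega

end coGrass

/-- Bruhat order between co-Grassmannian permutations reverses inclusion of partitions. -/
lemma lamPart_le_of_bruhat {k0 : ℕ} {v w : Equiv.Perm (Fin n)} (hw : UniqueAscentAt w k0)
    (hv : UniqueAscentAt v k0) (hvw : bruhatLE v w) (m : ℕ) :
    lamPart w k0 m ≤ lamPart v k0 m := by
  have hk := hv.2.1
  by_cases hm : 1 ≤ m ∧ m ≤ k0
  · obtain ⟨j, hj, rfl⟩ : ∃ j, j < k0 ∧ m = k0 - j := ⟨k0 - m, by omega, by omega⟩
    have ev := hv.lamPart_eq hj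
    have ew := hw.lamPart_eq hj
    have h := hvw (n - 1 - permVal v j) j
    -- for this entry of the rank matrices all of the first `j + 1` entries of `v` are counted
    have h1 : Finset.range (j + 1) ⊆ (Finset.range n).filter
        (fun t => t ≤ j ∧ n ≤ permVal v t + (n - 1 - permVal v j) + 1) := by
      intro t ht
      rw [Finset.mem_range] at ht
      rw [Finset.mem_filter, Finset.mem_range]
      have : permVal v j ≤ permVal v t := by
        rcases eq_or_lt_of_le (show t ≤ j by omega) with rfl | h2
        · exact le_rfl
        · exact (hv.dec h2 (by omega) (Or.inl hj)).le
      omega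
    have h2 : (Finset.range n).filter
        (fun t => t ≤ j ∧ n ≤ permVal w t + (n - 1 - permVal v j) + 1) ⊆
        Finset.range (j + 1) := by
      intro t ht
      rw [Finset.mem_filter] at ht
      rw [Finset.mem_range]
      omega
    have h3 := Finset.eq_of_subset_of_card_le h2 ((Finset.card_le_card h1).trans h)
    have h4 : j ∈ Finset.range (j + 1) := by simp
    rw [← h3, Finset.mem_filter] at h4
    omega
  · rw [lamPart, if_neg hm]
    omega

/-! ### Reading order and flags -/

/-- All boxes of the grid in reading order. -/
def gridList (n : ℕ) : List (ℕ × ℕ) :=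
  (List.range n).reverse.flatMap fun i => (List.range n).map fun j => (i, j)

lemma readingList_eq (n : ℕ) (P : Finset (ℕ × ℕ)) :
    readingList n P = (gridList n).filter (· ∈ P) := by
  simp only [readingList, gridList, List.filter_flatMap, List.filter_map]
  rfl

lemma gridList_pairwise (n : ℕ) :
    (gridList n).Pairwise fun b b' => b'.1 < b.1 ∨ (b'.1 = b.1 ∧ b.2 < b'.2) := by
  rw [gridList, List.pairwise_flatMap]
  refine ⟨fun i _ => ?_, ?_⟩
  · rw [List.pairwise_map]
    exact List.pairwise_lt_range.imp fun h => Or.inr ⟨rfl, h⟩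
  · rw [List.pairwise_reverse]
    refine List.pairwise_lt_range.imp fun h x hx y hy => ?_
    rw [List.mem_map] at hx hy
    obtain ⟨_, _, rfl⟩ := hx
    obtain ⟨_, _, rfl⟩ := hy
    exact Or.inl h

lemma mem_gridList (n : ℕ) (b : ℕ × ℕ) : b ∈ gridList n ↔ b.1 < n ∧ b.2 < n := by
  obtain ⟨i, j⟩ := b
  simp [gridList]

lemma gridList_nodup (n : ℕ) : (gridList n).Nodup :=
  (gridList_pairwise n).imp fun h he => by subst he; omega

lemma mem_grid_of_rothe {v : Equiv.Perm (Fin n)} {b : ℕ × ℕ} (hb : b ∈ Rothe v) :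
    b ∈ gridList n := by
  rw [Rothe, Finset.mem_filter, Finset.mem_product, Finset.mem_range, Finset.mem_range] at hb
  exact (mem_gridList n b).2 hb.1

lemma readingList_toFinset {v : Equiv.Perm (Fin n)} {P : Finset (ℕ × ℕ)} (hP : P ⊆ Rothe v) :
    (readingList n P).toFinset = P := by
  ext b
  rw [readingList_eq, List.mem_toFinset, List.mem_filter, decide_eq_true_iff]
  exact ⟨fun h => h.2, fun h => ⟨mem_grid_of_rothe (hP h), h⟩⟩

lemma readingList_length {v : Equiv.Perm (Fin n)} {P : Finset (ℕ × ℕ)} (hP : P ⊆ Rothe v) :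
    (readingList n P).length = P.card := by
  conv_rhs => rw [← readingList_toFinset hP]
  rw [List.toFinset_card_of_nodup]
  rw [readingList_eq]
  exact (gridList_nodup n).filter _

lemma UniqueAscentAt.reading_pairwise {v : Equiv.Perm (Fin n)} {k0 : ℕ}
    (hv : UniqueAscentAt v k0) :
    (readingList n (Rothe v)).Pairwise fun b b' => boxQ v k0 b' < boxQ v k0 b ∨
      (boxQ v k0 b' = boxQ v k0 b ∧ boxR k0 b' < boxR k0 b) := by
  rw [readingList_eq]
  refine ((gridList_pairwise n).filter _).imp_of_mem ?_
  intro b b' hb hb' h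
  rw [List.mem_filter, decide_eq_true_iff] at hb hb'
  obtain ⟨p, hp, hpn, hj, hi, hlt⟩ := (hv.mem_rothe b).1 hb.2
  obtain ⟨p', hp', hpn', hj', hi', hlt'⟩ := (hv.mem_rothe b').1 hb'.2
  rw [boxQ_eq hpn hi, boxQ_eq hpn' hi', boxR, boxR]
  rcases h with h | ⟨h, h'⟩
  · left
    rcases lt_trichotomy p p' with h1 | rfl | h1
    · have := hv.dec h1 hpn' (Or.inr hp)
      omega
    · omega
    · omega
  · right
    have : p = p' := permVal_inj v hpn hpn' (by omega)
    subst this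
    omega

/-- Flagged tableaux are those whose boxes all lie in `D(v)`. -/
lemma flagged_iff {k0 : ℕ} {v w : Equiv.Perm (Fin n)} (hw : UniqueAscentAt w k0)
    (hv : UniqueAscentAt v k0) (T : ℕ × ℕ → ℕ) :
    BoxTab (boxR k0) (boxQ v k0) (readingList n (Rothe v)) (lamPart w k0) T ↔
      IsFlaggedSSYT (lamPart w k0) (bFlag v w k0) T := by
  unfold BoxTab IsFlaggedSSYT
  refine and_congr_left ?_
  rintro ⟨-, t3, t4⟩
  set μ := lamPart w k0 with hμ
  have hmem : ∀ b, b ∈ readingList n (Rothe v) ↔ b ∈ Rothe v := fun b => by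
    rw [← List.mem_toFinset, readingList_toFinset subset_rfl]
  have hbox : ∀ m c, (∃ b ∈ readingList n (Rothe v), boxR k0 b = T (m, c) ∧
      boxQ v k0 b + m = T (m, c) + c) ↔ (1 ≤ T (m, c) ∧ T (m, c) ≤ k0 ∧ m + 1 ≤ T (m, c) + c ∧
        T (m, c) + c ≤ lamPart v k0 (T (m, c)) + m) := by
    intro m c
    have := hv.exists_box_iff (T (m, c)) (T (m, c) + c - m)
    constructor
    · rintro ⟨b, hb, h1, h2⟩
      have := this.1 ⟨b, (hmem b).1 hb, h1, by omega⟩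
      omega
    · rintro ⟨h1, h2, h3, h4⟩
      obtain ⟨b, hb, h5, h6⟩ := this.2 (by omega)
      exact ⟨b, (hmem b).2 hb, h5, by omega⟩
  simp only [hbox]
  have hrow : ∀ m c d, 1 ≤ m → 1 ≤ c → c ≤ d → d ≤ μ m → T (m, c) ≤ T (m, d) := by
    intro m c d h1 h2 h3 h4
    induction d, h3 using Nat.le_induction with
    | base => exact le_rfl
    | succ t ht ih => exact (ih (by omega)).trans (t3 m t h1 (by omega) h4)
  have hmk : ∀ m c, 1 ≤ c → c ≤ μ m → m ≤ k0 := by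
    intro m c h1 h2
    by_contra h
    rw [hμ, lamPart_of_gt (by omega)] at h2
    omega
  have hsup : ∀ m i, 1 ≤ i → i ≤ k0 → μ m + i ≤ lamPart v k0 i + m → i ≤ bFlag v w k0 m := by
    intro m i h1 h2 h3
    refine Finset.le_sup (f := id) ?_
    rw [Finset.mem_filter, Finset.mem_Icc]
    exact ⟨by omega, h3⟩
  constructor
  · intro h m c h1 h2 h3
    have hc := h m c h1 h2 h3
    have he := h m (μ m) h1 (by omega) le_rfl
    refine ⟨hc.1, (hrow m c _ h1 h2 h3 le_rfl).trans (hsup m _ he.1 he.2.1 (by omega))⟩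
  · intro h m c h1 h2 h3
    obtain ⟨h4, h5⟩ := h m c h1 h2 h3
    -- the supremum defining the flag is attained
    have hne : ((Finset.Icc 1 (n + k0)).filter
        (fun i => lamPart w k0 m + i ≤ lamPart v k0 i + m)).Nonempty := by
      by_contra hne
      rw [bFlag, Finset.not_nonempty_iff_eq_empty.1 hne] at h5
      simp at h5
      omega
    obtain ⟨i, hi, hie⟩ := Finset.exists_mem_eq_sup _ hne id
    rw [← bFlag] at hie
    rw [Finset.mem_filter, Finset.mem_Icc] at hi
    have hmk' := hmk m c h2 h3
    have hik : i ≤ k0 := by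
      by_contra hik
      have := hi.2
      rw [lamPart_of_gt (by omega : k0 < i)] at this
      omega
    rw [id] at hie
    have hi2 : μ m + i ≤ lamPart v k0 i + m := hi.2
    -- `λ(v)_t - t` decreases with `t`
    have hanti := part_anti hv.lamPart_anti h4 (hie ▸ h5 : T (m, c) ≤ i)
    have hTm : m ≤ T (m, c) := by
      clear h5 h4 hne hanti hi2 hie hi hik hmk'
      induction m, h1 using Nat.le_induction with
      | base => exact (h 1 c le_rfl h2 h3).1
      | succ t ht ih =>
        have := ih (h3.trans (hw.lamPart_anti t ht))
        have := t4 t c ht h2 h3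
        omega
    omega

/-- Theorem 5.6, counting part: for co-Grassmannian `v ≤ w` with the
same unique ascent position `k₀`, one has `λ(w) ⊆ λ(v)`, and the number of reduced pipe
dreams for `w₀w` on `D(v)` equals the number of semistandard tableaux of shape `λ(w)`
flagged by `b`. -/
theorem grassmannian_multiplicity_tableaux (n : ℕ) (k0 : ℕ) (v w : Equiv.Perm (Fin n))
    (hw : UniqueAscentAt w k0) (hv : UniqueAscentAt v k0) (hvw : bruhatLE v w) :
    (∀ m : ℕ, lamPart w k0 m ≤ lamPart v k0 m) ∧
    (RedPipes v (longest * w)).card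
      = Set.ncard {T : ℕ × ℕ → ℕ | IsFlaggedSSYT (lamPart w k0) (bFlag v w k0) T} := by
  refine ⟨lamPart_le_of_bruhat hw hv hvw, ?_⟩
  have key := encard_chains (boxR k0) (boxQ v k0) (readingList n (Rothe v)) hv.reading_pairwise
    (lamPart w k0) hw.lamPart_anti
  have e1 : {P : Finset (ℕ × ℕ) | P ⊆ (readingList n (Rothe v)).toFinset ∧
      ChainTo (boxR k0) (boxQ v k0) ((readingList n (Rothe v)).filter (· ∈ P)) (lamPart w k0)} =
      ↑(RedPipes v (longest * w)) := by
    ext P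
    rw [Set.mem_ofPred_eq, readingList_toFinset subset_rfl, Finset.mem_coe, RedPipes, Pipes,
      Finset.mem_filter, Finset.mem_filter, Finset.mem_powerset, and_assoc]
    refine and_congr_right fun hP => ?_
    have hf : (readingList n (Rothe v)).filter (· ∈ P) = readingList n P := by
      rw [readingList_eq, readingList_eq, List.filter_filter]
      refine List.filter_congr fun b _ => ?_
      by_cases hb : b ∈ P
      · simp [hb, hP hb]
      · simp [hb]
    rw [hf, chain_iff v k0 _ _ _ (fun b hb => ?_) _ _ hw.grass, ← reduced_iff,
      readingList_length hP, demazure]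
    rw [← List.mem_toFinset, readingList_toFinset hP] at hb
    exact hv.label (hP hb)
  have e2 : {T | BoxTab (boxR k0) (boxQ v k0) (readingList n (Rothe v)) (lamPart w k0) T} =
      {T : ℕ × ℕ → ℕ | IsFlaggedSSYT (lamPart w k0) (bFlag v w k0) T} :=
    Set.ext fun T => flagged_iff hw hv T
  have key' : (↑(RedPipes v (longest * w)) : Set (Finset (ℕ × ℕ))).encard =
      {T : ℕ × ℕ → ℕ | IsFlaggedSSYT (lamPart w k0) (bFlag v w k0) T}.encard := by
    rw [← e1, ← e2]
    convert key
  rw [Set.encard_coe_eq_coe_finsetCard] at key'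
  rw [Set.ncard, ← key', ENat.toNat_natCast]

end
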